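/- Fix an integer r ≥ 1. Then R̃_2(rK_2; 3r − 1) ≤ 3r − 2. Equivalently: Builder has a strategy that, playing on K_{3r−1} with 2 colors, guarantees within 3r − 2 moves that some color class contains r pairwise disjoint edges, against every Painter strategy. -/

import Mathlib

open Finset

/-- Two edges of a complete graph (elements of `Sym2 (Fin n)`) are disjoint if they
share no vertex. -/
def EdgeDisjoint {n : ℕ} (e f : Sym2 (Fin n)) : Prop := ∀ v, v ∈ e → v ∉ f

/-- A finite set of elements of `Sym2 (Fin n)` is a matching if each element is a genuine
(non-loop) edge and the edges are pairwise disjoint. -/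
def IsMatchingIn {n : ℕ} (M : Finset (Sym2 (Fin n))) : Prop :=
  (∀ e ∈ M, ¬ e.IsDiag) ∧ (M : Set (Sym2 (Fin n))).Pairwise EdgeDisjoint

/-- A history of the online Ramsey game on `K_n` with `t` colours: the list of
edges played so far, each together with the colour Painter gave it. -/
abbrev GameHistory (n t : ℕ) := List (Sym2 (Fin n) × Fin t)

/-- A Builder strategy: given the history so far, select the next edge. -/
abbrev BuilderStrategy (n t : ℕ) := GameHistory n t → Sym2 (Fin n)

/-- A Painter strategy: given the history so far and the newly selected edge,
choose a colour for it. -/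
abbrev PainterStrategy (n t : ℕ) := GameHistory n t → Sym2 (Fin n) → Fin t

/-- The history after `k` moves when Builder plays strategy `B` against Painter
strategy `P`. -/
def gamePlay {n t : ℕ} (B : BuilderStrategy n t) (P : PainterStrategy n t) :
    ℕ → GameHistory n t
  | 0 => []
  | k + 1 =>
      let h := gamePlay B P k
      h ++ [(B h, P h (B h))]

/-- Builder plays legally for the first `k` moves against `P`: every selected edge
is a genuine (non-loop) edge not selected before. -/
def BuilderValid {n t : ℕ} (B : BuilderStrategy n t) (P : PainterStrategy n t)
    (k : ℕ) : Prop :=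
  ∀ j < k, ¬ (B (gamePlay B P j)).IsDiag ∧
    B (gamePlay B P j) ∉ (gamePlay B P j).map Prod.fst

/-- The history `h` contains, for some colour `i`, a matching of `r i` edges all
coloured `i`. -/
def HistoryHasMatching (n t : ℕ) (r : Fin t → ℕ) (h : GameHistory n t) : Prop :=
  ∃ i : Fin t, ∃ M : Finset (Sym2 (Fin n)),
    M.card = r i ∧ IsMatchingIn M ∧ ∀ e ∈ M, (e, i) ∈ h

/-- Builder can force, within `k` legal moves on `K_n` with `t` colours, some colour
`i` to contain a matching of `r i` edges, against every Painter strategy. -/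
def BuilderWinsIn (n t : ℕ) (r : Fin t → ℕ) (k : ℕ) : Prop :=
  ∃ B : BuilderStrategy n t, (∀ P : PainterStrategy n t, BuilderValid B P k) ∧
    ∀ P : PainterStrategy n t, HistoryHasMatching n t r (gamePlay B P k)

/-- The restricted online Ramsey number `R̃(r₁K₂,…,r_tK₂; n)`: the least `k` such
that Builder can force a win within `k` moves. -/
noncomputable def restrictedOnlineRamsey (n t : ℕ) (r : Fin t → ℕ) : ℕ :=
  sInf {k | BuilderWinsIn n t r k}

/-- A colouring `c` of (the edges of) `K_N` with `t` colours contains, for some colour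
`i`, a matching of `r i` edges all coloured `i`. -/
def ColoringHasMatching (N t : ℕ) (r : Fin t → ℕ) (c : Sym2 (Fin N) → Fin t) : Prop :=
  ∃ i : Fin t, ∃ M : Finset (Sym2 (Fin N)),
    M.card = r i ∧ IsMatchingIn M ∧ ∀ e ∈ M, c e = i

/-- The classical Ramsey number `R(r₁K₂,…,r_tK₂)`: the least `N` such that every
`t`-colouring of the edges of `K_N` contains, for some `i`, a matching of `r i`
edges in colour `i`. -/
noncomputable def matchingRamsey (t : ℕ) (r : Fin t → ℕ) : ℕ :=
  sInf {N | ∀ c : Sym2 (Fin N) → Fin t, ColoringHasMatching N t r c}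

/-- Builder can win with exactly `k` further legal moves from history `h`. -/
def WinFrom (n t : ℕ) (r : Fin t → ℕ) : ℕ → GameHistory n t → Prop
  | 0, h => HistoryHasMatching n t r h
  | k + 1, h => ∃ e : Sym2 (Fin n), (¬ e.IsDiag ∧ e ∉ h.map Prod.fst) ∧
      ∀ c : Fin t, WinFrom n t r k (h ++ [(e, c)])

theorem gamePlay_length {n t : ℕ} (B : BuilderStrategy n t) (P : PainterStrategy n t) (k : ℕ) :
    (gamePlay B P k).length = k := by
  induction k with
  | zero => rfl
  | succ k ih => simp [gamePlay, ih]

theorem builderWinsIn_of_winFrom {n t : ℕ} {r : Fin t → ℕ} {k : ℕ} (e₀ : Sym2 (Fin n))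
    (hW : WinFrom n t r k []) : BuilderWinsIn n t r k := by
  classical
  let Q : GameHistory n t → Sym2 (Fin n) → Prop := fun h e =>
    (¬ e.IsDiag ∧ e ∉ h.map Prod.fst) ∧
      ∀ c : Fin t, WinFrom n t r (k - h.length - 1) (h ++ [(e, c)])
  let B : BuilderStrategy n t := fun h => if H : ∃ e, Q h e then H.choose else e₀
  have hB : ∀ h, (∃ e, Q h e) → Q h (B h) := by
    intro h H
    have : B h = H.choose := dif_pos H
    rw [this]
    exact H.choose_spec
  have hstep : ∀ h : GameHistory n t, h.length < k → WinFrom n t r (k - h.length) h →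
      ∃ e, Q h e := by
    intro h hl hw
    obtain ⟨d, hd⟩ : ∃ d, k - h.length = d + 1 := ⟨k - h.length - 1, by omega⟩
    rw [hd] at hw
    obtain ⟨e, he, hc⟩ := hw
    refine ⟨e, he, ?_⟩
    rw [hd]
    exact hc
  have main : ∀ P : PainterStrategy n t, ∀ j ≤ k,
      WinFrom n t r (k - j) (gamePlay B P j) := by
    intro P j
    induction j with
    | zero => intro _; exact hW
    | succ j ih =>
      intro hj
      have h1 := ih (by omega)
      have hl := gamePlay_length B P j
      have h2 := hB _ (hstep (gamePlay B P j) (by omega) (by rw [hl]; exact h1))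
      have h3 := h2.2 (P (gamePlay B P j) (B (gamePlay B P j)))
      rw [hl] at h3
      exact h3
  refine ⟨B, ?_, ?_⟩
  · intro P j hj
    have hl := gamePlay_length B P j
    exact (hB _ (hstep (gamePlay B P j) (by omega) (by rw [hl]; exact main P j hj.le))).1
  · intro P
    have := main P k le_rfl
    rw [Nat.sub_self] at this
    exact this

/-- Once a matching is there, Builder may play arbitrary legal moves. -/
theorem winFrom_pad {n t : ℕ} {r : Fin t → ℕ} (k : ℕ) : ∀ (h : GameHistory n t),
    HistoryHasMatching n t r h → h.length + k ≤ n.choose 2 → WinFrom n t r k h := by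
  classical
  induction k with
  | zero => intro h hm _; exact hm
  | succ k ih =>
    intro h hm hl
    have hex : ∃ e : Sym2 (Fin n), ¬ e.IsDiag ∧ e ∉ h.map Prod.fst := by
      by_contra hcon
      push Not at hcon
      have h1 : (univ.filter (fun e : Sym2 (Fin n) => ¬ e.IsDiag)) ⊆
          (h.map Prod.fst).toFinset := by
        intro e he
        rw [List.mem_toFinset]
        exact hcon e (by simpa using he)
      have h2 := Finset.card_le_card h1
      have h3 := List.toFinset_card_le (h.map Prod.fst)
      have h4 := Sym2.card_subtype_not_diag (α := Fin n)
      rw [Fintype.card_subtype, Fintype.card_fin] at h4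
      rw [List.length_map] at h3
      omega
    obtain ⟨e, he⟩ := hex
    refine ⟨e, he, fun c => ih _ ?_ ?_⟩
    · obtain ⟨i, M, h1, h2, h3⟩ := hm
      exact ⟨i, M, h1, h2, fun e he => List.mem_append_left _ (h3 e he)⟩
    · simp; omega

theorem matching_insert {n : ℕ} {M : Finset (Sym2 (Fin n))} {U : Finset (Fin n)}
    (hM : IsMatchingIn M) (hU : ∀ e ∈ M, ∀ v ∈ e, v ∈ U) {e : Sym2 (Fin n)}
    (he : ¬ e.IsDiag) (hd : ∀ v ∈ e, v ∉ U) :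
    IsMatchingIn (insert e M) ∧ (insert e M).card = M.card + 1 := by
  have hne : e ∉ M := by
    intro hm
    induction e with
    | _ a b => exact hd a (by simp) (hU _ hm a (by simp))
  refine ⟨⟨?_, ?_⟩, Finset.card_insert_of_notMem hne⟩
  · intro f hf
    rcases Finset.mem_insert.1 hf with rfl | hf
    · exact he
    · exact hM.1 f hf
  · rw [Finset.coe_insert]
    refine hM.2.insert ?_
    intro f hf _
    exact ⟨fun v hv hv' => hd v hv (hU f hf v hv'), fun v hv hv' => hd v hv' (hU f hf v hv)⟩

theorem path_matching {n t : ℕ} {h : GameHistory n t} {c : Fin t} (m : ℕ) :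
    ∀ (M : Finset (Sym2 (Fin n))) (U : Finset (Fin n)) (p : List (Fin n)),
    IsMatchingIn M → (∀ e ∈ M, ∀ v ∈ e, v ∈ U) → (∀ e ∈ M, (e, c) ∈ h) →
    p.Nodup → (∀ v ∈ p, v ∉ U) → p.IsChain (fun a b => (s(a, b), c) ∈ h) →
    2 * m ≤ p.length →
    ∃ M' : Finset (Sym2 (Fin n)), M'.card = M.card + m ∧ IsMatchingIn M' ∧
      ∀ e ∈ M', (e, c) ∈ h := by
  induction m with
  | zero => intro M U p hM _ hh _ _ _ _; exact ⟨M, rfl, hM, hh⟩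
  | succ m ih =>
    intro M U p hM hU hh hp hpU hch hl
    match p, hp, hpU, hch, hl with
    | [], _, _, _, hl => simp at hl
    | [a], _, _, _, hl => simp at hl; omega
    | a :: b :: p, hp, hpU, hch, hl =>
      have hab : a ≠ b := by rintro rfl; simp at hp
      have hch' := List.isChain_cons_cons.1 hch
      have hins := matching_insert hM hU (e := s(a, b)) (by simpa using hab) (by
        intro v hv
        rcases Sym2.mem_iff.1 hv with rfl | rfl
        · exact hpU _ (by simp)
        · exact hpU _ (by simp))
      obtain ⟨M', h1, h2, h3⟩ := ih (insert s(a, b) M) (U ∪ {a, b}) p hins.1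
        (by
          intro e he v hv
          rcases Finset.mem_insert.1 he with rfl | he
          · rcases Sym2.mem_iff.1 hv with rfl | rfl <;> simp
          · exact Finset.mem_union_left _ (hU e he v hv))
        (by
          intro e he
          rcases Finset.mem_insert.1 he with rfl | he
          · exact hch'.1
          · exact hh e he)
        (by simp at hp; tauto)
        (by
          intro v hv hv'
          simp only [List.nodup_cons, List.mem_cons, not_or] at hp
          simp only [Finset.mem_union, Finset.mem_insert, Finset.mem_singleton] at hv'
          rcases hv' with h | rfl | rfl
          · exact hpU v (by simp [hv]) h
          · exact hp.1.2 hv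
          · exact hp.2.1 hv)
        hch'.2.tail (by simp at hl; omega)
      exact ⟨M', by omega, h2, h3⟩

/-- The invariant: `m` further edges of each colour needed, dead vertices `U`, active
monochromatic path `p` of colour `c`. -/
structure GameInv (r : ℕ) (h : GameHistory (3 * r - 1) 2) (m : ℕ)
    (M : Fin 2 → Finset (Sym2 (Fin (3 * r - 1)))) (U : Finset (Fin (3 * r - 1)))
    (p : List (Fin (3 * r - 1))) (c : Fin 2) : Prop where
  matching : ∀ i, IsMatchingIn (M i)
  card : ∀ i, (M i).card + m = r
  cover : ∀ i, ∀ e ∈ M i, ∀ v ∈ e, v ∈ U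
  col : ∀ i, ∀ e ∈ M i, (e, i) ∈ h
  cardU : U.card + 3 * m = 3 * r
  nodup : p.Nodup
  disj : ∀ v ∈ p, v ∉ U
  chain : p.IsChain (fun a b => (s(a, b), c) ∈ h)
  fresh : ∀ x ∈ h, ∀ v ∈ x.1, v ∈ U ∨ v ∈ p
  len : h.length + 1 ≤ U.card + p.length

theorem exists_fresh {n : ℕ} (U : Finset (Fin n)) (p : List (Fin n))
    (hl : U.card + p.length < n) : ∃ w, w ∉ U ∧ w ∉ p := by
  by_contra hcon
  push Not at hcon
  have h1 : (univ : Finset (Fin n)) ⊆ U ∪ p.toFinset := by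
    intro w _
    rw [Finset.mem_union, List.mem_toFinset]
    by_cases hw : w ∈ U
    · exact Or.inl hw
    · exact Or.inr (hcon w hw)
  have h2 := Finset.card_le_card h1
  have h3 := Finset.card_union_le U p.toFinset
  have h4 := p.toFinset_card_le
  rw [Finset.card_univ, Fintype.card_fin] at h2
  omega

theorem choose_bound (r : ℕ) (hr : 1 ≤ r) : 3 * r - 2 ≤ (3 * r - 1).choose 2 := by
  obtain ⟨d, hd⟩ : ∃ d, 3 * r - 1 = d + 2 := ⟨3 * r - 3, by omega⟩
  have h2 : 3 * r - 2 = d + 1 := by omega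
  rw [hd, h2, Nat.choose_succ_succ' (d + 1) 1, Nat.choose_one_right]
  omega

theorem winFrom_inv (r : ℕ) (hr : 1 ≤ r) (k : ℕ) : ∀ (h : GameHistory (3 * r - 1) 2) (m : ℕ)
    (M : Fin 2 → Finset (Sym2 (Fin (3 * r - 1)))) (U : Finset (Fin (3 * r - 1)))
    (p : List (Fin (3 * r - 1))) (c : Fin 2), GameInv r h m M U p c →
    h.length + k = 3 * r - 2 → WinFrom (3 * r - 1) 2 (fun _ => r) k h := by
  have hcb := choose_bound r hr
  induction k with
  | zero =>
    intro h m M U p c I hk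
    have hU := I.cardU
    have hlen := I.len
    obtain ⟨M', h1, h2, h3⟩ := path_matching m (M c) U p (I.matching c) (I.cover c) (I.col c)
      I.nodup I.disj I.chain (by omega)
    exact ⟨c, M', by rw [h1]; exact I.card c, h2, h3⟩
  | succ k ih =>
    -- the case of a nonempty short path
    have key : ∀ (h : GameHistory (3 * r - 1) 2) (m : ℕ)
        (M : Fin 2 → Finset (Sym2 (Fin (3 * r - 1)))) (U : Finset (Fin (3 * r - 1)))
        (v : Fin (3 * r - 1)) (p : List (Fin (3 * r - 1))) (c : Fin 2),
        GameInv r h m M U (v :: p) c → (v :: p).length < 2 * m →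
        h.length + (k + 1) = 3 * r - 2 →
        WinFrom (3 * r - 1) 2 (fun _ => r) (k + 1) h := by
      intro h m M U v p c I hm hk
      have hU := I.cardU
      obtain ⟨w, hwU, hwp⟩ := exists_fresh U (v :: p) (by omega)
      have hwv : w ≠ v := by rintro rfl; simp at hwp
      have hvU : v ∉ U := I.disj v (by simp)
      refine ⟨s(w, v), ⟨by simpa using hwv, ?_⟩, ?_⟩
      · intro hmem
        obtain ⟨x, hx, hxe⟩ := List.mem_map.1 hmem
        rcases I.fresh x hx w (by rw [hxe]; simp) with h1 | h1
        · exact hwU h1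
        · exact hwp h1
      intro c'
      have hext : ∀ c'' : Fin 2, (v :: p).IsChain (fun a b => (s(a, b), c'') ∈ h) → c' = c'' →
          WinFrom (3 * r - 1) 2 (fun _ => r) k (h ++ [(s(w, v), c')]) := by
        intro c'' hch hcc
        subst hcc
        refine ih _ m M U (w :: v :: p) c' ?_ (by simp; omega)
        refine ⟨I.matching, I.card, I.cover, fun i e he => List.mem_append_left _ (I.col i e he),
          I.cardU, List.nodup_cons.2 ⟨hwp, I.nodup⟩, ?_, ?_, ?_, ?_⟩
        · intro x hx
          rcases List.mem_cons.1 hx with rfl | hx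
          · exact hwU
          · exact I.disj x hx
        · refine List.isChain_cons_cons.2 ⟨by simp, ?_⟩
          exact hch.imp (fun a b hab => List.mem_append_left _ hab)
        · intro x hx y hy
          rcases List.mem_append.1 hx with hx | hx
          · rcases I.fresh x hx y hy with h1 | h1
            · exact Or.inl h1
            · exact Or.inr (List.mem_cons_of_mem _ h1)
          · rw [List.mem_singleton] at hx
            subst hx
            rcases Sym2.mem_iff.1 hy with rfl | rfl <;> simp
        · have := I.len
          simp at this ⊢
          omega
      by_cases hcc : c' = c
      · exact hext c I.chain hcc
      cases p with
      | nil => exact hext c' (List.isChain_singleton _) rfl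
      | cons u q =>
        have hnd := I.nodup
        simp only [List.nodup_cons, List.mem_cons, not_or] at hnd hwp
        have hch := List.isChain_cons_cons.1 I.chain
        have huU : u ∉ U := I.disj u (by simp)
        let e : Fin 2 → Sym2 (Fin (3 * r - 1)) := fun i => if i = c then s(v, u) else s(w, v)
        have hemem : ∀ i, ∀ x ∈ e i, x = w ∨ x = v ∨ x = u := by
          intro i x hx
          by_cases hi : i = c
          · simp only [e, hi, if_true, Sym2.mem_iff] at hx
            tauto
          · simp only [e, hi, if_false, Sym2.mem_iff] at hx
            tauto
        have hed : ∀ i, ¬ (e i).IsDiag := by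
          intro i
          by_cases hi : i = c
          · simpa [e, hi] using hnd.1.1
          · simpa [e, hi] using hwv
        have hins := fun i => matching_insert (I.matching i) (I.cover i) (hed i) (by
          intro x hx
          rcases hemem i x hx with rfl | rfl | rfl <;> assumption)
        have hcardU : (insert w (insert v (insert u U))).card = U.card + 3 := by
          rw [Finset.card_insert_of_notMem, Finset.card_insert_of_notMem,
            Finset.card_insert_of_notMem huU]
          · simp [hvU, hnd.1.1]
          · simp [hwU, hwp.1, hwp.2.1]
        have hm1 : 1 ≤ m := by simp at hm; omega
        refine ih _ (m - 1) (fun i => insert (e i) (M i)) (insert w (insert v (insert u U))) q c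
          ?_ (by simp; omega)
        refine ⟨fun i => (hins i).1, ?_, ?_, ?_, by omega, hnd.2.2, ?_, ?_, ?_, ?_⟩
        · intro i
          have := I.card i
          have := (hins i).2
          omega
        · intro i f hf x hx
          rcases Finset.mem_insert.1 hf with rfl | hf
          · rcases hemem i x hx with rfl | rfl | rfl <;> simp
          · have := I.cover i f hf x hx
            simp [this]
        · intro i f hf
          rcases Finset.mem_insert.1 hf with rfl | hf
          · by_cases hi : i = c
            · subst hi
              simpa [e] using Or.inl hch.1
            · have : i = c' := by omega
              subst this
              simp [e, hi]
          · exact List.mem_append_left _ (I.col i f hf)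
        · intro x hx hx'
          simp only [Finset.mem_insert] at hx'
          rcases hx' with rfl | rfl | rfl | h1
          · exact hwp.2.2 hx
          · exact hnd.1.2 hx
          · exact hnd.2.1 hx
          · exact I.disj x (by simp [hx]) h1
        · exact hch.2.tail.imp (fun a b hab => List.mem_append_left _ hab)
        · intro x hx y hy
          rcases List.mem_append.1 hx with hx | hx
          · have := I.fresh x hx y hy
            simp only [List.mem_cons] at this
            simp only [Finset.mem_insert]
            tauto
          · rw [List.mem_singleton] at hx
            subst hx
            rcases Sym2.mem_iff.1 hy with rfl | rfl <;> simp
        · have := I.len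
          simp only [List.length_cons, List.length_append, List.length_nil] at this ⊢
          omega
    intro h m M U p c I hk
    have hU := I.cardU
    by_cases hlong : 2 * m ≤ p.length
    · obtain ⟨M', h1, h2, h3⟩ := path_matching m (M c) U p (I.matching c) (I.cover c) (I.col c)
        I.nodup I.disj I.chain hlong
      exact winFrom_pad (k + 1) h ⟨c, M', by rw [h1]; exact I.card c, h2, h3⟩ (by omega)
    · cases p with
      | cons v p => exact key h m M U v p c I (by omega) hk
      | nil =>
        simp only [List.length_nil] at hlong
        obtain ⟨w, hwU, _⟩ := exists_fresh U [] (by simp; omega)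
        refine key h m M U w [] c ⟨I.matching, I.card, I.cover, I.col, I.cardU, by simp,
          by simpa using hwU, List.isChain_singleton _, ?_, ?_⟩ (by simp; omega) hk
        · intro x hx y hy
          rcases I.fresh x hx y hy with h1 | h1
          · exact Or.inl h1
          · simp at h1
        · have := I.len
          simp at this ⊢
          omega

/-- For `r ≥ 1`, `R̃₂(rK₂; 3r − 1) ≤ 3r − 2`. -/
theorem restrictedOnlineRamsey_two_colours_upper (r : ℕ) (hr : 1 ≤ r) :
    restrictedOnlineRamsey (3 * r - 1) 2 (fun _ => r) ≤ 3 * r - 2 := by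
  apply Nat.sInf_le
  let v : Fin (3 * r - 1) := ⟨0, by omega⟩
  refine builderWinsIn_of_winFrom s(v, v) ?_
  refine winFrom_inv r hr _ [] r (fun _ => ∅) ∅ [v] 0 ?_ (by simp)
  exact ⟨by simp [IsMatchingIn], by simp, by simp, by simp, by simp, by simp, by simp,
    List.isChain_singleton _, by simp, by simp⟩
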